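/- (Bombieri–Vaaler Siegel lemma, statement) Let A = (a_{mk}) be an s × r integer matrix of rank s with r > s. Then there exists a nonzero integer vector x ∈ ℤ^r with Ax = 0 and max_i |x_i| ≤ (D^{-1}·√|det(A·A^T)|)^{1/(r−s)}, where D is the greatest common divisor of the determinants of all s × s minors of A. -/

import Mathlib

open MeasureTheory
open scoped ENNReal Pointwise

theorem bm_compact {K L : Set ℝ} (hK : IsCompact K) (hL : IsCompact L) (hK0 : K.Nonempty)
    (hL0 : L.Nonempty) : volume K + volume L ≤ volume (K + L) := by
  obtain ⟨M, hM⟩ := hK.exists_isGreatest hK0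
  obtain ⟨m, hm⟩ := hL.exists_isLeast hL0
  have h1 : volume ((fun x => x + m) '' K) = volume K := by
    simp [Set.image_add_right, measure_preimage_add_right]
  have h2 : volume ((fun x => M + x) '' L) = volume L := by
    simp [Set.image_add_left, measure_preimage_add]
  have hd : AEDisjoint volume ((fun x => x + m) '' K) ((fun x => M + x) '' L) := by
    have : ((fun x => x + m) '' K) ∩ ((fun x => M + x) '' L) ⊆ {M + m} := by
      rintro _ ⟨⟨x, hx, rfl⟩, ⟨y, hy, hxy⟩⟩
      have := hM.2 hx
      have := hm.2 hy
      simp only [Set.mem_singleton_iff] at *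
      linarith
    exact measure_mono_null this (by simp)
  have hmeas : NullMeasurableSet ((fun x => M + x) '' L) volume :=
    (hL.image (by fun_prop)).measurableSet.nullMeasurableSet
  calc volume K + volume L = volume (((fun x => x + m) '' K) ∪ ((fun x => M + x) '' L)) := by
        rw [measure_union₀ hmeas hd, h1, h2]
    _ ≤ volume (K + L) := by
        apply measure_mono
        rintro _ (⟨x, hx, rfl⟩ | ⟨x, hx, rfl⟩)
        · exact Set.add_mem_add hx hm.1
        · exact Set.add_mem_add hM.1 hx

theorem bm_meas {a b : ℝ} (ha : 0 < a) (hb : 0 < b) {A B C : Set ℝ}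
    (hA : MeasurableSet A) (hB : MeasurableSet B) (hA0 : A.Nonempty) (hB0 : B.Nonempty)
    (H : ∀ x ∈ A, ∀ y ∈ B, a * x + b * y ∈ C) :
    ENNReal.ofReal a * volume A + ENNReal.ofReal b * volume B ≤ volume C := by
  have key : ∀ K ⊆ A, IsCompact K → ∀ L ⊆ B, IsCompact L →
      ENNReal.ofReal a * volume K + ENNReal.ofReal b * volume L ≤ volume C := by
    intro K hKA hK L hLB hL
    obtain ⟨x, hx⟩ := hA0
    obtain ⟨y, hy⟩ := hB0
    have hs : ∀ (c : ℝ) (S : Set ℝ), 0 < c → volume (c • S) = ENNReal.ofReal c * volume S := by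
      intro c S hc
      rw [Measure.addHaar_smul]
      simp [abs_of_pos hc]
    have h := bm_compact (K := a • insert x K) (L := b • insert y L)
      ((hK.insert x).smul a) ((hL.insert y).smul b) ((Set.insert_nonempty _ _).smul_set)
      ((Set.insert_nonempty _ _).smul_set)
    rw [hs _ _ ha, hs _ _ hb] at h
    refine le_trans ?_ (h.trans (measure_mono ?_))
    · gcongr <;> exact Set.subset_insert _ _
    · rintro _ ⟨_, ⟨u, hu, rfl⟩, _, ⟨v, hv, rfl⟩, rfl⟩
      exact H u (Set.insert_subset hx hKA hu) v (Set.insert_subset hy hLB hv)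
  rw [hA.measure_eq_iSup_isCompact, hB.measure_eq_iSup_isCompact]
  simp only [ENNReal.mul_iSup, iSup_and', iSup_subtype']
  have : ∀ A : Set ℝ, Nonempty {K : Set ℝ // K ⊆ A ∧ IsCompact K} := fun A =>
    ⟨⟨∅, by simp⟩⟩
  exact ENNReal.iSup_add_iSup_le fun K L => key K.1 K.2.1 K.2.2 L.1 L.2.1 L.2.2

theorem pl_norm {a b : ℝ} (ha : 0 < a) (hb : 0 < b) {f g h : ℝ → ℝ}
    (hf : Measurable f) (hg : Measurable g) (hh : Measurable h)
    (f0 : ∀ x, 0 ≤ f x) (g0 : ∀ x, 0 ≤ g x) (h0 : ∀ x, 0 ≤ h x)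
    (f1 : ∀ x, f x ≤ 1) (g1 : ∀ x, g x ≤ 1)
    (fs : ∀ t, 0 < t → t < 1 → ∃ x, t < f x) (gs : ∀ t, 0 < t → t < 1 → ∃ x, t < g x)
    (H : ∀ t, 0 < t → ∀ x y, t < f x → t < g y → t < h (a * x + b * y)) :
    ENNReal.ofReal a * (∫⁻ x, ENNReal.ofReal (f x)) + ENNReal.ofReal b * ∫⁻ x, ENNReal.ofReal (g x)
      ≤ ∫⁻ x, ENNReal.ofReal (h x) := by
  rw [lintegral_eq_lintegral_meas_lt _ (.of_forall f0) hf.aemeasurable,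
    lintegral_eq_lintegral_meas_lt _ (.of_forall g0) hg.aemeasurable,
    lintegral_eq_lintegral_meas_lt _ (.of_forall h0) hh.aemeasurable,
    ← lintegral_const_mul' _ _ ENNReal.ofReal_ne_top,
    ← lintegral_const_mul' _ _ ENNReal.ofReal_ne_top]
  have hm : ∀ f : ℝ → ℝ, Measurable (fun t => volume {a | t < f a}) := fun f =>
    Antitone.measurable (fun s t hst => measure_mono (fun x hx => lt_of_le_of_lt hst hx))
  rw [← lintegral_add_left ((hm f).const_mul _)]
  refine setLIntegral_mono (hm h) ?_
  intro t ht
  by_cases h1 : t < 1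
  · exact bm_meas ha hb (measurableSet_lt measurable_const hf)
      (measurableSet_lt measurable_const hg) (fs t ht h1) (gs t ht h1)
      (fun x hx y hy => H t ht x y hx hy)
  · have e1 : {x | t < f x} = ∅ := by
      ext x; simp; linarith [f1 x]
    have e2 : {x | t < g x} = ∅ := by
      ext x; simp; linarith [g1 x]
    simp [e1, e2]

theorem ennreal_amgm {a b : ℝ} (ha : 0 < a) (hb : 0 < b) (hab : a + b = 1) (x y : ℝ≥0∞) :
    x ^ a * y ^ b ≤ ENNReal.ofReal a * x + ENNReal.ofReal b * y := by
  have ha' : ENNReal.ofReal a ≠ 0 := by simpa using ha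
  have hb' : ENNReal.ofReal b ≠ 0 := by simpa using hb
  by_cases hx : x = ⊤
  · subst hx; simp [ENNReal.mul_top ha']
  by_cases hy : y = ⊤
  · subst hy; simp [ENNReal.mul_top hb']
  lift x to NNReal using hx
  lift y to NNReal using hy
  have h := NNReal.geom_mean_le_arith_mean2_weighted ⟨a, ha.le⟩ ⟨b, hb.le⟩ x y
    (NNReal.eq hab)
  rw [← ENNReal.coe_rpow_of_nonneg _ ha.le, ← ENNReal.coe_rpow_of_nonneg _ hb.le,
    ENNReal.ofReal_eq_coe_nnreal ha.le, ENNReal.ofReal_eq_coe_nnreal hb.le]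
  exact_mod_cast h

theorem pl_sup_one {a b : ℝ} (ha : 0 < a) (hb : 0 < b) (hab : a + b = 1) {f g h : ℝ → ℝ≥0∞}
    (hf : Measurable f) (hg : Measurable g) (hh : Measurable h)
    (fs : ⨆ x, f x = 1) (gs : ⨆ x, g x = 1)
    (H : ∀ x y, f x ^ a * g y ^ b ≤ h (a * x + b * y)) :
    (∫⁻ x, f x) ^ a * (∫⁻ x, g x) ^ b ≤ ∫⁻ x, h x := by
  have f1 : ∀ x, f x ≤ 1 := fun x => fs ▸ le_iSup f x
  have g1 : ∀ x, g x ≤ 1 := fun x => gs ▸ le_iSup g x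
  have aux : ∀ f : ℝ → ℝ≥0∞, (∀ x, f x ≤ 1) → (⨆ x, f x = 1) → ∀ t, 0 < t → t < 1 →
      ∃ x, t < (f x).toReal := by
    intro f f1 fs t ht0 ht
    have : ENNReal.ofReal t < ⨆ x, f x := by rw [fs]; simpa using ht
    obtain ⟨x, hx⟩ := lt_iSup_iff.1 this
    exact ⟨x, (ENNReal.ofReal_lt_iff_lt_toReal ht0.le
      (ne_top_of_le_ne_top ENNReal.one_ne_top (f1 x))).1 hx⟩
  have key := pl_norm ha hb (f := fun x => (f x).toReal) (g := fun x => (g x).toReal)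
    (h := fun x => (min (h x) 1).toReal) hf.ennreal_toReal hg.ennreal_toReal
    (hh.min measurable_const).ennreal_toReal (by simp) (by simp) (by simp)
    (fun x => ENNReal.toReal_le_of_le_ofReal zero_le_one (by simpa using f1 x))
    (fun x => ENNReal.toReal_le_of_le_ofReal zero_le_one (by simpa using g1 x)) (aux f f1 fs) (aux g g1 gs) ?_
  · have e : ∀ {u : ℝ≥0∞}, u ≤ 1 → ENNReal.ofReal u.toReal = u := fun {u} hu =>
      ENNReal.ofReal_toReal (ne_top_of_le_ne_top ENNReal.one_ne_top hu)
    simp only [e (f1 _), e (g1 _), e (min_le_right _ _)] at key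
    refine (ennreal_amgm ha hb hab _ _).trans (key.trans ?_)
    exact lintegral_mono fun x => min_le_left _ _
  · intro t ht x y hx hy
    have hx' : ENNReal.ofReal t < f x := (ENNReal.ofReal_lt_iff_lt_toReal ht.le
      (ne_top_of_le_ne_top ENNReal.one_ne_top (f1 x))).2 hx
    have hy' : ENNReal.ofReal t < g y := (ENNReal.ofReal_lt_iff_lt_toReal ht.le
      (ne_top_of_le_ne_top ENNReal.one_ne_top (g1 y))).2 hy
    refine (ENNReal.ofReal_lt_iff_lt_toReal ht.le
      (ne_top_of_le_ne_top ENNReal.one_ne_top (min_le_right _ _))).1 (lt_min ?_ (hx'.trans_le (f1 x)))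
    refine lt_of_lt_of_le ?_ (H x y)
    calc ENNReal.ofReal t = ENNReal.ofReal t ^ a * ENNReal.ofReal t ^ b := by
          rw [← ENNReal.rpow_add _ _ (by simpa using ht) (by simp), hab, ENNReal.rpow_one]
      _ < _ := ENNReal.mul_lt_mul (ENNReal.rpow_lt_rpow hx' ha) (ENNReal.rpow_lt_rpow hy' hb)

theorem pl_bdd {a b : ℝ} (ha : 0 < a) (hb : 0 < b) (hab : a + b = 1) {f g h : ℝ → ℝ≥0∞}
    (hf : Measurable f) (hg : Measurable g) (hh : Measurable h)
    (fs : ⨆ x, f x ≠ ⊤) (gs : ⨆ x, g x ≠ ⊤)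
    (H : ∀ x y, f x ^ a * g y ^ b ≤ h (a * x + b * y)) :
    (∫⁻ x, f x) ^ a * (∫⁻ x, g x) ^ b ≤ ∫⁻ x, h x := by
  by_cases hA : ⨆ x, f x = 0
  · have : f = 0 := by funext x; simpa using (le_iSup f x).trans hA.le
    simp [this, ha]
  by_cases hB : ⨆ x, g x = 0
  · have : g = 0 := by funext x; simpa using (le_iSup g x).trans hB.le
    simp [this, hb]
  set A := ⨆ x, f x with hAdef
  set B := ⨆ x, g x with hBdef
  have hAa : A ^ a ≠ 0 := by simp [ha, hA, fs, ENNReal.rpow_eq_zero_iff, ha.not_gt]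
  have hBb : B ^ b ≠ 0 := by simp [hb, hB, gs, ENNReal.rpow_eq_zero_iff, hb.not_gt]
  have hAa' : A ^ a ≠ ⊤ := ENNReal.rpow_ne_top_of_nonneg ha.le fs
  have hBb' : B ^ b ≠ ⊤ := ENNReal.rpow_ne_top_of_nonneg hb.le gs
  have cc : ∀ u v : ℝ≥0∞, (A⁻¹ * u) ^ a * (B⁻¹ * v) ^ b = (A ^ a * B ^ b)⁻¹ * (u ^ a * v ^ b) := by
    intro u v
    rw [ENNReal.mul_rpow_of_nonneg _ _ ha.le, ENNReal.mul_rpow_of_nonneg _ _ hb.le,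
      ENNReal.inv_rpow, ENNReal.inv_rpow, ENNReal.mul_inv (Or.inl hAa) (Or.inl hAa')]
    ring
  have key := pl_sup_one ha hb hab (f := fun x => A⁻¹ * f x) (g := fun x => B⁻¹ * g x)
    (h := fun x => (A ^ a * B ^ b)⁻¹ * h x) (hf.const_mul _) (hg.const_mul _) (hh.const_mul _)
    (by rw [← ENNReal.mul_iSup]; exact ENNReal.inv_mul_cancel hA fs)
    (by rw [← ENNReal.mul_iSup]; exact ENNReal.inv_mul_cancel hB gs)
    (fun x y => by rw [cc]; gcongr; exact H x y)
  rw [lintegral_const_mul _ hf, lintegral_const_mul _ hg, lintegral_const_mul _ hh, cc] at key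
  have h0 : (A ^ a * B ^ b)⁻¹ ≠ 0 := ENNReal.inv_ne_zero.2 (ENNReal.mul_ne_top hAa' hBb')
  have h1 : (A ^ a * B ^ b)⁻¹ ≠ ⊤ := ENNReal.inv_ne_top.2 (mul_ne_zero hAa hBb)
  exact (ENNReal.mul_le_mul_iff_right h0 h1).1 key

theorem pl_one {a b : ℝ} (ha : 0 < a) (hb : 0 < b) (hab : a + b = 1) {f g h : ℝ → ℝ≥0∞}
    (hf : Measurable f) (hg : Measurable g) (hh : Measurable h)
    (H : ∀ x y, f x ^ a * g y ^ b ≤ h (a * x + b * y)) :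
    (∫⁻ x, f x) ^ a * (∫⁻ x, g x) ^ b ≤ ∫⁻ x, h x := by
  have tr : ∀ f : ℝ → ℝ≥0∞, Measurable f → ∫⁻ x, f x = ⨆ n : ℕ, ∫⁻ x, min (f x) n := by
    intro f hf
    rw [← lintegral_iSup (fun n => hf.min measurable_const)
      (fun m n hmn x => min_le_min le_rfl (by exact_mod_cast hmn))]
    congr 1; funext x
    have := (inf_iSup_eq (f x) (fun n : ℕ => (n : ℝ≥0∞)))
    rw [ENNReal.iSup_natCast] at this
    simpa using this
  have rs : ∀ {c : ℝ} (u : ℕ → ℝ≥0∞), 0 < c → (⨆ n, u n) ^ c = ⨆ n, (u n) ^ c := by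
    intro c u hc
    exact (ENNReal.orderIsoRpow c hc).map_iSup u
  rw [tr f hf, tr g hg, rs _ ha, rs _ hb, ENNReal.iSup_mul]
  refine iSup_le fun m => ?_
  rw [ENNReal.mul_iSup]
  refine iSup_le fun n => ?_
  refine pl_bdd ha hb hab (hf.min measurable_const) (hg.min measurable_const) hh ?_ ?_ ?_
  · exact ne_top_of_le_ne_top (ENNReal.natCast_ne_top m) (iSup_le fun x => min_le_right _ _)
  · exact ne_top_of_le_ne_top (ENNReal.natCast_ne_top n) (iSup_le fun x => min_le_right _ _)
  · intro x y
    refine le_trans ?_ (H x y)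
    gcongr <;> exact min_le_left _ _

theorem lintegral_cons {n : ℕ} {f : (Fin (n + 1) → ℝ) → ℝ≥0∞} (hf : Measurable f) :
    ∫⁻ x, f x = ∫⁻ t : ℝ, ∫⁻ x : Fin n → ℝ, f (Fin.cons t x) := by
  have h := (volume_preserving_piFinSuccAbove (fun _ : Fin (n + 1) => ℝ) 0).symm
  rw [← h.lintegral_comp hf, Measure.volume_eq_prod, lintegral_prod]
  · refine lintegral_congr fun t => lintegral_congr fun x => ?_
    have : (MeasurableEquiv.piFinSuccAbove (fun _ : Fin (n + 1) => ℝ) 0).symm (t, x) =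
        (Fin.cons t x : Fin (n + 1) → ℝ) := by
      change (0 : Fin (n + 1)).insertNth t x = (Fin.cons t x : Fin (n + 1) → ℝ)
      exact Fin.insertNth_zero' t x
    rw [this]
  · exact (hf.comp (MeasurableEquiv.measurable _)).aemeasurable

theorem measurable_cons {n : ℕ} : Measurable (fun p : ℝ × (Fin n → ℝ) => (Fin.cons p.1 p.2 : Fin (n + 1) → ℝ)) := by
  refine measurable_pi_lambda _ fun i => ?_
  refine Fin.cases ?_ (fun j => ?_) i
  · simpa using measurable_fst
  · simp only [Fin.cons_succ]; fun_prop

theorem cons_comb {n : ℕ} (a b s t : ℝ) (x y : Fin n → ℝ) :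
    a • (Fin.cons s x : Fin (n + 1) → ℝ) + b • (Fin.cons t y : Fin (n + 1) → ℝ) =
      Fin.cons (a * s + b * t) (a • x + b • y) := by
  funext i
  refine Fin.cases ?_ (fun j => ?_) i <;> simp

theorem pl_pi {a b : ℝ} (ha : 0 < a) (hb : 0 < b) (hab : a + b = 1) (n : ℕ) :
    ∀ {f g h : (Fin n → ℝ) → ℝ≥0∞}, Measurable f → Measurable g → Measurable h →
    (∀ x y, f x ^ a * g y ^ b ≤ h (a • x + b • y)) →
    (∫⁻ x, f x) ^ a * (∫⁻ x, g x) ^ b ≤ ∫⁻ x, h x := by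
  induction n with
  | zero =>
    intro f g h hf hg hh H
    have e : ∀ f : (Fin 0 → ℝ) → ℝ≥0∞, ∫⁻ x, f x = f 0 := by
      intro f
      rw [Measure.volume_pi_eq_dirac (0 : Fin 0 → ℝ), lintegral_dirac]
    rw [e, e, e]
    simpa using H 0 0
  | succ n ih =>
    intro f g h hf hg hh H
    rw [lintegral_cons hf, lintegral_cons hg, lintegral_cons hh]
    have hm : ∀ f : (Fin (n + 1) → ℝ) → ℝ≥0∞, Measurable f →
        Measurable (fun t : ℝ => ∫⁻ x : Fin n → ℝ, f (Fin.cons t x)) := fun f hf =>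
      (hf.comp measurable_cons).lintegral_prod_right'
    have hs : ∀ f : (Fin (n + 1) → ℝ) → ℝ≥0∞, Measurable f → ∀ t : ℝ,
        Measurable (fun x : Fin n → ℝ => f (Fin.cons t x)) := fun f hf t =>
      (hf.comp measurable_cons).comp measurable_prodMk_left
    refine pl_one ha hb hab (hm f hf) (hm g hg) (hm h hh) fun s t => ?_
    refine ih (hs f hf s) (hs g hg t) (hs h hh _) fun x y => ?_
    rw [← cons_comb]
    exact H _ _

/-- log-concavity -/
def LC {E : Type*} [AddCommGroup E] [Module ℝ E] (f : E → ℝ≥0∞) : Prop :=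
  ∀ a b : ℝ, 0 < a → 0 < b → a + b = 1 → ∀ x y, f x ^ a * f y ^ b ≤ f (a • x + b • y)

theorem LC.mul {E : Type*} [AddCommGroup E] [Module ℝ E] {f g : E → ℝ≥0∞} (hf : LC f) (hg : LC g) :
    LC (fun x => f x * g x) := by
  intro a b ha hb hab x y
  rw [ENNReal.mul_rpow_of_nonneg _ _ ha.le, ENNReal.mul_rpow_of_nonneg _ _ hb.le,
    mul_mul_mul_comm]
  exact mul_le_mul' (hf a b ha hb hab x y) (hg a b ha hb hab x y)

theorem LC.prod {n : ℕ} {f : ℝ → ℝ≥0∞} (hf : LC f) :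
    LC (fun x : Fin n → ℝ => ∏ i, f (x i)) := by
  intro a b ha hb hab x y
  rw [← ENNReal.prod_rpow_of_nonneg ha.le, ← ENNReal.prod_rpow_of_nonneg hb.le,
    ← Finset.prod_mul_distrib]
  exact Finset.prod_le_prod' fun i _ => hf a b ha hb hab _ _

/-- gaussian -/
noncomputable def gam (t : ℝ) : ℝ≥0∞ := ENNReal.ofReal (Real.exp (-Real.pi * t ^ 2))

/-- unit interval -/
noncomputable def iv (t : ℝ) : ℝ≥0∞ := (Set.Icc (-(1 / 2) : ℝ) (1 / 2)).indicator 1 t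

theorem lc_indicator {E : Type*} [AddCommGroup E] [Module ℝ E] {K : Set E} (hK : Convex ℝ K) :
    LC (K.indicator (1 : E → ℝ≥0∞)) := by
  intro a b ha hb hab x y
  by_cases hx : x ∈ K
  · by_cases hy : y ∈ K
    · simp [hx, hy, hK hx hy ha.le hb.le hab]
    · simp [hy, hb]
  · simp [hx, ha]

theorem lc_gam : LC gam := by
  intro a b ha hb hab x y
  unfold gam
  rw [ENNReal.ofReal_rpow_of_nonneg (Real.exp_nonneg _) ha.le,
    ENNReal.ofReal_rpow_of_nonneg (Real.exp_nonneg _) hb.le,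
    ← ENNReal.ofReal_mul (Real.rpow_nonneg (Real.exp_nonneg _) _), ← Real.exp_mul, ← Real.exp_mul, ← Real.exp_add]
  apply ENNReal.ofReal_le_ofReal
  apply Real.exp_le_exp.2
  have hb' : b = 1 - a := by linarith
  subst hb'
  simp only [smul_eq_mul]
  have : 0 ≤ Real.pi * (a * (1 - a) * (x - y) ^ 2) := by positivity
  nlinarith

theorem gam_le_one (t : ℝ) : gam t ≤ 1 := by
  unfold gam
  rw [ENNReal.ofReal_le_one, Real.exp_le_one_iff]
  have := Real.pi_pos
  nlinarith [mul_nonneg this.le (sq_nonneg t)]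

theorem measurable_gam : Measurable gam := by unfold gam; fun_prop
theorem measurable_iv : Measurable iv := (measurable_const).indicator measurableSet_Icc

theorem lintegral_gam : ∫⁻ t, gam t = 1 := by
  unfold gam
  rw [← ofReal_integral_eq_lintegral_ofReal (integrable_exp_neg_mul_sq Real.pi_pos)
    (.of_forall fun x => Real.exp_nonneg _), integral_gaussian]
  simp [Real.pi_ne_zero]

theorem lintegral_iv : ∫⁻ t, iv t = 1 := by
  unfold iv
  rw [lintegral_indicator_one measurableSet_Icc]
  norm_num

theorem LC.anti {F : ℝ → ℝ≥0∞} (hF : LC F) (he : ∀ t, F (-t) = F t) {t u : ℝ} (htu : |t| ≤ |u|) :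
    F u ≤ F t := by
  rcases htu.eq_or_lt with h | h
  · rcases abs_eq_abs.1 h with rfl | rfl
    · rfl
    · rw [he]
  · wlog hu : 0 ≤ u generalizing u
    · have := this (u := -u) (by simpa using htu) (by simpa using h) (by linarith)
      rwa [he] at this
    rw [abs_of_nonneg hu] at h
    have hu' : 0 < u := lt_of_le_of_lt (abs_nonneg _) h
    obtain ⟨h1, h2⟩ := abs_lt.1 h
    have h3 := hF ((u + t) / (2 * u)) ((u - t) / (2 * u)) (by apply div_pos <;> linarith)
      (by apply div_pos <;> linarith) (by field_simp; ring) u (-u)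
    have e1 : ((u + t) / (2 * u)) • u + ((u - t) / (2 * u)) • (-u) = t := by
      simp only [smul_eq_mul]; field_simp; ring
    rw [he, e1, ← ENNReal.rpow_add_of_nonneg _ _ (by apply div_nonneg <;> linarith) (by apply div_nonneg <;> linarith)] at h3
    have e2 : (u + t) / (2 * u) + (u - t) / (2 * u) = 1 := by field_simp; ring
    rwa [e2, ENNReal.rpow_one] at h3

theorem peak_one {F : ℝ → ℝ≥0∞} (hm : Measurable F) (hF : LC F) (he : ∀ t, F (-t) = F t) :
    ∫⁻ t, F t * gam t ≤ ∫⁻ t, F t * iv t := by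
  set c := F (1 / 2) with hc
  have hle : ∀ t, t ∈ Set.Icc (-(1 / 2) : ℝ) (1 / 2) → c ≤ F t := fun t ht =>
    hF.anti he (by rw [abs_of_pos (by norm_num : (0:ℝ) < 1 / 2)]; exact abs_le.2 ht)
  have hge : ∀ t, t ∉ Set.Icc (-(1 / 2) : ℝ) (1 / 2) → F t ≤ c := fun t ht =>
    hF.anti he (by
      rw [abs_of_pos (by norm_num : (0:ℝ) < 1 / 2)]
      by_contra hcon
      exact ht (abs_le.1 (le_of_not_ge hcon)))
  by_cases hct : c = ⊤
  · have : ∫⁻ t, c * iv t ≤ ∫⁻ t, F t * iv t := by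
      refine lintegral_mono fun t => ?_
      by_cases ht : t ∈ Set.Icc (-(1 / 2) : ℝ) (1 / 2)
      · simp only [iv, Set.indicator_of_mem ht]; gcongr; exact hle t ht
      · simp only [iv, Set.indicator_of_notMem ht, mul_zero, le_refl]
    rw [lintegral_const_mul _ measurable_iv, lintegral_iv, hct, mul_one] at this
    exact le_top.trans this
  have key : ∫⁻ t, (F t * gam t + c * iv t) ≤ ∫⁻ t, (F t * iv t + c * gam t) := by
    refine lintegral_mono fun t => ?_
    by_cases ht : t ∈ Set.Icc (-(1 / 2) : ℝ) (1 / 2)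
    · obtain ⟨d, hd⟩ := exists_add_of_le (hle t ht)
      simp only [iv, Set.indicator_of_mem ht, hd, Pi.one_apply, mul_one]
      calc (c + d) * gam t + c = d * gam t + (c + c * gam t) := by ring
        _ ≤ d * 1 + (c + c * gam t) := by gcongr; exact gam_le_one t
        _ = _ := by ring
    · simp only [iv, Set.indicator_of_notMem ht, mul_zero, add_zero, zero_add]
      gcongr
      exact hge t ht
  rw [lintegral_add_left (by exact hm.mul measurable_gam), lintegral_add_left (by exact hm.mul measurable_iv),
    lintegral_const_mul _ measurable_iv, lintegral_const_mul _ measurable_gam, lintegral_iv,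
    lintegral_gam, mul_one] at key
  exact (ENNReal.add_le_add_iff_right hct).1 key

theorem peak_pi (n : ℕ) : ∀ {f : (Fin n → ℝ) → ℝ≥0∞}, Measurable f → LC f → (∀ x, f (-x) = f x) →
    ∫⁻ x, f x * ∏ i, gam (x i) ≤ ∫⁻ x, f x * ∏ i, iv (x i) := by
  induction n with
  | zero => intro f _ _ _; simp
  | succ n ih =>
    intro f hm hf he
    have mg := measurable_gam
    have mi := measurable_iv
    have cneg : ∀ (t : ℝ) (x : Fin n → ℝ), (Fin.cons (-t) (-x) : Fin (n + 1) → ℝ) = -Fin.cons t x := by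
      intro t x; funext i
      refine Fin.cases ?_ (fun j => ?_) i <;> simp
    have hmc := hm.comp (measurable_cons (n := n))
    have hm1 : ∀ t : ℝ, Measurable (fun x : Fin n → ℝ => f (Fin.cons t x)) := fun t =>
      hmc.comp measurable_prodMk_left
    have hm2 : ∀ x : Fin n → ℝ, Measurable (fun t : ℝ => f (Fin.cons t x)) := fun x =>
      hmc.comp measurable_prodMk_right
    have pg : Measurable (fun x : Fin n → ℝ => ∏ i, gam (x i)) := by fun_prop
    have pi' : Measurable (fun x : Fin n → ℝ => ∏ i, iv (x i)) := by fun_prop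
    have hG : Measurable (fun t : ℝ => ∫⁻ x : Fin n → ℝ, f (Fin.cons t x) * ∏ i, gam (x i)) :=
      Measurable.lintegral_prod_right' (f := fun p : ℝ × (Fin n → ℝ) => f (Fin.cons p.1 p.2) * ∏ i, gam (p.2 i))
        (hmc.mul (pg.comp measurable_snd))
    have hT : Measurable (fun x : Fin n → ℝ => ∫⁻ t : ℝ, f (Fin.cons t x) * iv t) :=
      Measurable.lintegral_prod_left' (f := fun p : ℝ × (Fin n → ℝ) => f (Fin.cons p.1 p.2) * iv p.1)
        (hmc.mul (mi.comp measurable_fst))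
    calc ∫⁻ x, f x * ∏ i, gam (x i)
        = ∫⁻ t : ℝ, (∫⁻ x : Fin n → ℝ, f (Fin.cons t x) * ∏ i, gam (x i)) * gam t := by
          rw [lintegral_cons (by fun_prop)]
          refine lintegral_congr fun t => ?_
          rw [← lintegral_mul_const _ (by exact (hm1 t).mul pg)]
          refine lintegral_congr fun x => ?_
          rw [Fin.prod_univ_succ]
          simp only [Fin.cons_zero, Fin.cons_succ]
          ring
      _ ≤ ∫⁻ t : ℝ, (∫⁻ x : Fin n → ℝ, f (Fin.cons t x) * ∏ i, gam (x i)) * iv t := by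
          refine peak_one hG ?_ ?_
          · intro a b ha hb hab s t
            refine pl_pi ha hb hab n ((hm1 s).mul pg) ((hm1 t).mul pg) ((hm1 _).mul pg) fun x y => ?_
            rw [ENNReal.mul_rpow_of_nonneg _ _ ha.le, ENNReal.mul_rpow_of_nonneg _ _ hb.le,
              mul_mul_mul_comm]
            refine mul_le_mul' ?_ (lc_gam.prod a b ha hb hab x y)
            have := hf a b ha hb hab (Fin.cons s x) (Fin.cons t y)
            rwa [cons_comb] at this
          · intro t
            rw [← lintegral_neg_eq_self]
            refine lintegral_congr fun x => ?_
            rw [cneg, he]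
            simp [gam]
      _ = ∫⁻ x : Fin n → ℝ, (∫⁻ t : ℝ, f (Fin.cons t x) * iv t) * ∏ i, gam (x i) := by
          have e1 : ∀ t : ℝ, (∫⁻ x : Fin n → ℝ, f (Fin.cons t x) * ∏ i, gam (x i)) * iv t =
              ∫⁻ x : Fin n → ℝ, f (Fin.cons t x) * iv t * ∏ i, gam (x i) := by
            intro t
            rw [← lintegral_mul_const _ (by exact (hm1 t).mul pg)]
            refine lintegral_congr fun x => ?_
            ring
          have e2 : ∀ x : Fin n → ℝ, (∫⁻ t : ℝ, f (Fin.cons t x) * iv t) * ∏ i, gam (x i) =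
              ∫⁻ t : ℝ, f (Fin.cons t x) * iv t * ∏ i, gam (x i) := by
            intro x
            rw [← lintegral_mul_const _ (by exact (hm2 x).mul mi)]
          simp only [e1, e2]
          exact lintegral_lintegral_swap
            ((hmc.mul (mi.comp measurable_fst)).mul (pg.comp measurable_snd)).aemeasurable
      _ ≤ ∫⁻ x : Fin n → ℝ, (∫⁻ t : ℝ, f (Fin.cons t x) * iv t) * ∏ i, iv (x i) := by
          refine ih hT ?_ ?_
          · intro a b ha hb hab x y
            refine pl_one ha hb hab ((hm2 x).mul mi) ((hm2 y).mul mi) ((hm2 _).mul mi) fun s t => ?_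
            rw [ENNReal.mul_rpow_of_nonneg _ _ ha.le, ENNReal.mul_rpow_of_nonneg _ _ hb.le,
              mul_mul_mul_comm]
            refine mul_le_mul' ?_ (lc_indicator (convex_Icc _ _) a b ha hb hab s t)
            have := hf a b ha hb hab (Fin.cons s x) (Fin.cons t y)
            rwa [cons_comb] at this
          · intro x
            rw [← lintegral_neg_eq_self]
            refine lintegral_congr fun t => ?_
            rw [cneg, he]
            have : iv (-t) = iv t := by
              unfold iv Set.indicator
              congr 1
              simp only [Set.mem_Icc, eq_iff_iff]
              constructor <;> rintro ⟨h1, h2⟩ <;> constructor <;> linarith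
            rw [this]
      _ = ∫⁻ t : ℝ, ∫⁻ x : Fin n → ℝ, f (Fin.cons t x) * iv t * ∏ i, iv (x i) := by
          have e2 : ∀ x : Fin n → ℝ, (∫⁻ t : ℝ, f (Fin.cons t x) * iv t) * ∏ i, iv (x i) =
              ∫⁻ t : ℝ, f (Fin.cons t x) * iv t * ∏ i, iv (x i) := by
            intro x
            rw [← lintegral_mul_const _ (by exact (hm2 x).mul mi)]
          simp only [e2]
          exact (lintegral_lintegral_swap
            ((hmc.mul (mi.comp measurable_fst)).mul (pi'.comp measurable_snd)).aemeasurable).symm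
      _ = ∫⁻ x, f x * ∏ i, iv (x i) := by
          rw [lintegral_cons (by fun_prop)]
          refine lintegral_congr fun t => lintegral_congr fun x => ?_
          rw [Fin.prod_univ_succ]
          simp only [Fin.cons_zero, Fin.cons_succ]
          ring

theorem lintegral_pi_prod (n : ℕ) : ∀ {φ : Fin n → ℝ → ℝ≥0∞}, (∀ i, Measurable (φ i)) →
    ∫⁻ x : Fin n → ℝ, ∏ i, φ i (x i) = ∏ i, ∫⁻ t, φ i t := by
  induction n with
  | zero => intro φ _; simp [Measure.volume_pi_eq_dirac (0 : Fin 0 → ℝ)]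
  | succ n ih =>
    intro φ hφ
    rw [lintegral_cons (by exact Finset.measurable_fun_prod _ fun i _ => (hφ i).comp (measurable_pi_apply i)),
      Fin.prod_univ_succ, ← ih (fun i => hφ i.succ), ← lintegral_mul_const _ (hφ 0)]
    refine lintegral_congr fun t => ?_
    rw [← lintegral_const_mul _ (by exact Finset.measurable_fun_prod _ fun i _ => (hφ i.succ).comp (measurable_pi_apply i))]
    refine lintegral_congr fun x => ?_
    rw [Fin.prod_univ_succ]
    simp

open Matrix in
theorem exists_compl {s r : ℕ} (M : Matrix (Fin s) (Fin r) ℝ) (hM : IsUnit (M * Mᵀ).det) :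
    ∃ (n : ℕ) (_ : s + n = r) (Q : Matrix (Fin n) (Fin r) ℝ), M * Qᵀ = 0 ∧ Q * Qᵀ = 1 := by
  let T : EuclideanSpace ℝ (Fin r) →ₗ[ℝ] (Fin s → ℝ) :=
    M.mulVecLin ∘ₗ (WithLp.linearEquiv 2 ℝ (Fin r → ℝ)).toLinearMap
  have hsurj : Function.Surjective T := by
    intro y
    refine ⟨WithLp.toLp 2 (Mᵀ *ᵥ ((M * Mᵀ)⁻¹ *ᵥ y)), ?_⟩
    change M *ᵥ (Mᵀ *ᵥ ((M * Mᵀ)⁻¹ *ᵥ y)) = y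
    rw [mulVec_mulVec, mulVec_mulVec, Matrix.mul_nonsing_inv _ hM, one_mulVec]
  have hrk := LinearMap.finrank_range_add_finrank_ker T
  rw [LinearMap.range_eq_top.2 hsurj, finrank_top] at hrk
  simp only [Module.finrank_fintype_fun_eq_card, Fintype.card_fin, finrank_euclideanSpace] at hrk
  let b := stdOrthonormalBasis ℝ (LinearMap.ker T)
  refine ⟨_, hrk, Matrix.of fun k i => (b k : EuclideanSpace ℝ (Fin r)) i, ?_, ?_⟩
  · ext j k
    have h1 : T (b k : EuclideanSpace ℝ (Fin r)) = 0 := (b k).2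
    exact congrFun h1 j
  · ext k l
    have h1 := orthonormal_iff_ite.1 b.orthonormal l k
    rw [Submodule.coe_inner, PiLp.inner_apply] at h1
    simp only [Matrix.mul_apply, Matrix.transpose_apply, Matrix.of_apply, Matrix.one_apply]
    simp only [RCLike.inner_apply, conj_trivial] at h1
    rw [h1]
    simp [eq_comm]

open Matrix in
theorem slab_gauss {s r : ℕ} (M : Matrix (Fin s) (Fin r) ℝ) (hM : IsUnit (M * Mᵀ).det) :
    ∃ C : ℝ, ∀ ε : ℝ, 0 < ε →
      ENNReal.ofReal (Real.exp (-Real.pi * (C * ε ^ 2)) * (2 * ε) ^ s / √(M * Mᵀ).det) ≤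
      ∫⁻ x : Fin r → ℝ, {x : Fin r → ℝ | ∀ j, |(M *ᵥ x) j| ≤ ε}.indicator 1 x * ∏ i, gam (x i) := by
  obtain ⟨n, hn, Q, hMQ, hQQ⟩ := exists_compl M hM
  let e : Fin s ⊕ Fin n ≃ Fin r := finSumFinEquiv.trans (finCongr hn)
  set G := (M * Mᵀ)⁻¹ with hG
  have hQM : Q * Mᵀ = 0 := by
    rw [← Matrix.transpose_eq_zero, transpose_mul, transpose_transpose, hMQ]
  let P : Matrix (Fin r) (Fin r) ℝ := (Matrix.fromRows M Q).submatrix e.symm id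
  let R : Matrix (Fin r) (Fin r) ℝ := (Matrix.fromCols (Mᵀ * G) Qᵀ).submatrix id e.symm
  have hPR : P * R = 1 := by
    have : fromRows M Q * fromCols (Mᵀ * G) Qᵀ = 1 := by
      rw [fromRows_mul_fromCols, ← Matrix.mul_assoc, ← Matrix.mul_assoc, hQM, hMQ, hQQ, hG,
        Matrix.mul_nonsing_inv _ hM, Matrix.zero_mul, fromBlocks_one]
    have h2 := congrArg (fun X => X.submatrix e.symm e.symm) this
    simp only [submatrix_one_equiv] at h2
    rw [← h2]
    exact (submatrix_mul _ _ e.symm id e.symm Function.bijective_id).symm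
  have hRP : R * P = 1 := mul_eq_one_comm.1 hPR
  have hRP' : Mᵀ * G * M + Qᵀ * Q = 1 := by
    have h1 : R * P = (fromCols (Mᵀ * G) Qᵀ * fromRows M Q).submatrix id id :=
      submatrix_mul_equiv (fromCols (Mᵀ * G) Qᵀ) (fromRows M Q) id e.symm id
    rw [← hRP, h1, fromCols_mul_fromRows]
    rfl
  have hdet : |P.det| = √(M * Mᵀ).det := by
    have h1 : P * Pᵀ = (fromBlocks (M * Mᵀ) 0 0 1).submatrix e.symm e.symm := by
      have : fromRows M Q * (fromRows M Q)ᵀ = fromBlocks (M * Mᵀ) 0 0 1 := by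
        rw [transpose_fromRows, fromRows_mul_fromCols, hQM, hMQ, hQQ]
      rw [← this]
      exact (submatrix_mul (fromRows M Q) (fromRows M Q)ᵀ e.symm id e.symm Function.bijective_id).symm
    have h2 := congrArg Matrix.det h1
    rw [det_mul, det_transpose, det_submatrix_equiv_self, det_fromBlocks_zero₂₁, det_one, mul_one] at h2
    rw [← h2, Real.sqrt_mul_self_eq_abs]
  have hdet0 : P.det ≠ 0 := (Matrix.isUnit_det_of_right_inverse hPR).ne_zero
  refine ⟨∑ i : Fin s, ∑ j : Fin s, |G i j|, fun ε hε => ?_⟩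
  set C := ∑ i : Fin s, ∑ j : Fin s, |G i j|
  -- quadratic form bound
  have hq : ∀ x : Fin r → ℝ, (∀ j, |(M *ᵥ x) j| ≤ ε) →
      ∑ i, x i ^ 2 ≤ C * ε ^ 2 + ∑ k, (Q *ᵥ x) k ^ 2 := by
    intro x hx
    have h1 : ∑ i, x i ^ 2 = (M *ᵥ x) ⬝ᵥ (G *ᵥ (M *ᵥ x)) + (Q *ᵥ x) ⬝ᵥ (Q *ᵥ x) := by
      have : x ⬝ᵥ ((Mᵀ * G * M + Qᵀ * Q) *ᵥ x) = x ⬝ᵥ x := by rw [hRP', one_mulVec]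
      rw [add_mulVec, dotProduct_add, ← mulVec_mulVec, ← mulVec_mulVec, ← mulVec_mulVec,
        dotProduct_mulVec, dotProduct_mulVec x, vecMul_transpose, vecMul_transpose] at this
      rw [this]
      simp [dotProduct, sq]
    rw [h1]
    have h2 : (Q *ᵥ x) ⬝ᵥ (Q *ᵥ x) = ∑ k, (Q *ᵥ x) k ^ 2 := by simp [dotProduct, sq]
    rw [h2]
    gcongr
    generalize M *ᵥ x = v at hx
    simp only [dotProduct, mulVec, C, Finset.sum_mul, Finset.mul_sum]
    refine Finset.sum_le_sum fun i _ => Finset.sum_le_sum fun j _ => ?_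
    calc v i * (G i j * v j) ≤ |v i * (G i j * v j)| := le_abs_self _
      _ = |G i j| * (|v i| * |v j|) := by rw [abs_mul, abs_mul]; ring
      _ ≤ |G i j| * (ε * ε) := by gcongr <;> apply hx
      _ = _ := by ring
  let φ : Fin r → ℝ → ℝ≥0∞ := fun i =>
    Sum.elim (fun _ : Fin s => (Set.Icc (-ε) ε).indicator 1) (fun _ : Fin n => gam) (e.symm i)
  have hφ : ∀ i, Measurable (φ i) := by
    intro i
    simp only [φ]
    rcases e.symm i with j | k
    · exact measurable_const.indicator measurableSet_Icc
    · exact measurable_gam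
  have hint : ∫⁻ y : Fin r → ℝ, ∏ i, φ i (y i) = ENNReal.ofReal (2 * ε) ^ s := by
    rw [lintegral_pi_prod r hφ, ← e.prod_comp, Fintype.prod_sum_type]
    simp only [φ, Equiv.symm_apply_apply, Sum.elim_inl, Sum.elim_inr, lintegral_gam,
      lintegral_indicator_one measurableSet_Icc, Real.volume_Icc]
    simp [two_mul]
  have hmap := Real.map_matrix_volume_pi_eq_smul_volume_pi hdet0
  have hmφ : Measurable (fun y : Fin r → ℝ => ∏ i, φ i (y i)) :=
    Finset.measurable_fun_prod _ fun i _ => (hφ i).comp (measurable_pi_apply i)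
  have hcv : ∫⁻ x : Fin r → ℝ, ∏ i, φ i ((P *ᵥ x) i) =
      ENNReal.ofReal |P.det⁻¹| * ENNReal.ofReal (2 * ε) ^ s := by
    rw [← hint, ← smul_eq_mul, ← lintegral_smul_measure, ← hmap, lintegral_map hmφ]
    · rfl
    · exact (LinearMap.continuous_of_finiteDimensional _).measurable
  calc ENNReal.ofReal (Real.exp (-Real.pi * (C * ε ^ 2)) * (2 * ε) ^ s / √(M * Mᵀ).det)
      = ENNReal.ofReal (Real.exp (-Real.pi * (C * ε ^ 2))) * ∫⁻ x : Fin r → ℝ, ∏ i, φ i ((P *ᵥ x) i) := by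
        rw [hcv, ← hdet, abs_inv, ← ENNReal.ofReal_pow (by positivity), ← ENNReal.ofReal_mul (by positivity),
          ← ENNReal.ofReal_mul (by positivity)]
        congr 1
        field_simp
    _ = ∫⁻ x : Fin r → ℝ, ENNReal.ofReal (Real.exp (-Real.pi * (C * ε ^ 2))) * ∏ i, φ i ((P *ᵥ x) i) := by
        rw [lintegral_const_mul' _ _ ENNReal.ofReal_ne_top]
    _ ≤ _ := by
        refine lintegral_mono fun x => ?_
        have hP1 : ∀ j, (P *ᵥ x) (e (Sum.inl j)) = (M *ᵥ x) j := by
          intro j; simp [P, mulVec, dotProduct]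
        have hP2 : ∀ j, (P *ᵥ x) (e (Sum.inr j)) = (Q *ᵥ x) j := by
          intro j; simp [P, mulVec, dotProduct]
        rw [← e.prod_comp, Fintype.prod_sum_type]
        simp only [φ, Equiv.symm_apply_apply, Sum.elim_inl, Sum.elim_inr, hP1, hP2]
        by_cases hx : ∀ j, |(M *ᵥ x) j| ≤ ε
        · have hx' : x ∈ {x : Fin r → ℝ | ∀ j, |(M *ᵥ x) j| ≤ ε} := hx
          have h1 : ∏ j, (Set.Icc (-ε) ε).indicator (1 : ℝ → ℝ≥0∞) ((M *ᵥ x) j) = 1 := by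
            refine Finset.prod_eq_one fun j _ => ?_
            have hmem : (M *ᵥ x) j ∈ Set.Icc (-ε) ε := abs_le.1 (hx j)
            rw [Set.indicator_of_mem hmem]; rfl
          rw [h1, Set.indicator_of_mem hx']
          simp only [gam, Pi.one_apply, one_mul]
          rw [← ENNReal.ofReal_prod_of_nonneg (fun _ _ => Real.exp_nonneg _),
            ← ENNReal.ofReal_prod_of_nonneg (fun _ _ => Real.exp_nonneg _),
            ← ENNReal.ofReal_mul (Real.exp_nonneg _), ← Real.exp_sum, ← Real.exp_sum, ← Real.exp_add,
            ← Finset.mul_sum, ← Finset.mul_sum, ← mul_add]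
          apply ENNReal.ofReal_le_ofReal
          apply Real.exp_le_exp.2
          nlinarith [hq x hx, Real.pi_pos]
        · push Not at hx
          obtain ⟨j, hj⟩ := hx
          have : ∏ j, (Set.Icc (-ε) ε).indicator (1 : ℝ → ℝ≥0∞) ((M *ᵥ x) j) = 0 := by
            refine Finset.prod_eq_zero (Finset.mem_univ j) ?_
            rw [Set.indicator_of_notMem]
            intro hcon
            exact absurd (abs_le.2 hcon) (not_le.2 hj)
          rw [this]
          simp

open Matrix in
theorem core {s r : ℕ} (hsr : s < r) (M : Matrix (Fin s) (Fin r) ℤ) (N : Matrix (Fin r) (Fin s) ℤ)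
    (hMN : M * N = 1) (T : ℝ) (hT : 0 < T)
    (hT2 : √((M * Mᵀ).det : ℝ) < T ^ (r - s)) (hdet : 0 < ((M * Mᵀ).det : ℝ)) :
    ∃ x : Fin r → ℤ, x ≠ 0 ∧ M *ᵥ x = 0 ∧ ∀ i, |(x i : ℝ)| ≤ T := by
  set M' : Matrix (Fin s) (Fin r) ℝ := M.map (Int.castRingHom ℝ) with hM'
  set N' : Matrix (Fin r) (Fin s) ℝ := N.map (Int.castRingHom ℝ) with hN'
  have hMN' : M' * N' = 1 := by
    rw [hM', hN', ← Matrix.map_mul, hMN]; simp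
  have hdetE : (M' * M'ᵀ).det = ((M * Mᵀ).det : ℝ) := by
    rw [hM', ← transpose_map, ← Matrix.map_mul]
    exact ((Int.castRingHom ℝ).map_det _).symm
  obtain ⟨C, hC⟩ := slab_gauss M' (by rw [hdetE]; exact hdet.ne'.isUnit)
  rw [hdetE] at hC
  set d : ℝ := √((M * Mᵀ).det : ℝ) with hd
  have hd0 : 0 < d := Real.sqrt_pos.2 hdet
  -- choose δ
  obtain ⟨δ, hδ0, hδ1, hδ⟩ : ∃ δ : ℝ, 0 < δ ∧ δ < 1 ∧
      d < T ^ (r - s) * (1 - δ) ^ s * Real.exp (-Real.pi * (C * (δ * (1 - δ) / (2 * T)) ^ 2)) := by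
    have hc : Continuous (fun δ : ℝ => T ^ (r - s) * (1 - δ) ^ s *
        Real.exp (-Real.pi * (C * (δ * (1 - δ) / (2 * T)) ^ 2))) := by fun_prop
    have h1 := (hc.tendsto 0).eventually_const_lt (u := d) (by simpa using hT2)
    have h2 : ∀ᶠ δ : ℝ in nhdsWithin 0 (Set.Ioi 0), δ < 1 :=
      nhdsWithin_le_nhds (gt_mem_nhds one_pos)
    obtain ⟨δ, ⟨h3, h4⟩, h5⟩ := (((h1.filter_mono nhdsWithin_le_nhds).and h2).and self_mem_nhdsWithin).exists
    exact ⟨δ, h5, h4, h3⟩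
  set ε : ℝ := δ * (1 - δ) / (2 * T) with hε
  have hε0 : 0 < ε := by
    have : 0 < 1 - δ := by linarith
    positivity
  let Φ : Matrix (Fin r) (Fin r) ℝ := 1 + ((δ - 1) • N') * M'
  let Ψ : Matrix (Fin r) (Fin r) ℝ := (2 * T)⁻¹ • Φ
  have hΦdet : Φ.det = δ ^ s := by
    simp only [Φ]
    rw [Matrix.det_one_add_mul_comm, Matrix.mul_smul, hMN']
    have : (1 : Matrix (Fin s) (Fin s) ℝ) + (δ - 1) • 1 = δ • 1 := by
      rw [sub_smul, one_smul]; abel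
    rw [this, det_smul, det_one]; simp
  have hΨdet : Ψ.det = ((2 * T)⁻¹) ^ r * δ ^ s := by
    simp only [Ψ]
    rw [det_smul, hΦdet]; simp
  have hMΦ : M' * Φ = δ • M' := by
    simp only [Φ]
    rw [Matrix.mul_add, Matrix.mul_one, ← Matrix.mul_assoc, Matrix.mul_smul, hMN', Matrix.smul_mul,
      Matrix.one_mul, sub_smul, one_smul]
    abel
  let slab : Set (Fin r → ℝ) := {x | ∀ j, |(M' *ᵥ x) j| ≤ ε}
  let cube : Set (Fin r → ℝ) := {x | ∀ i, x i ∈ Set.Icc (-(1 / 2) : ℝ) (1 / 2)}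
  have slab_conv : Convex ℝ slab := by
    intro x hx y hy a b ha hb hab j
    rw [mulVec_add, mulVec_smul, mulVec_smul]
    simp only [Pi.add_apply, Pi.smul_apply, smul_eq_mul]
    calc |a * (M' *ᵥ x) j + b * (M' *ᵥ y) j| ≤ |a * (M' *ᵥ x) j| + |b * (M' *ᵥ y) j| := abs_add_le _ _
      _ = a * |(M' *ᵥ x) j| + b * |(M' *ᵥ y) j| := by
        rw [abs_mul, abs_mul, abs_of_nonneg ha, abs_of_nonneg hb]
      _ ≤ a * ε + b * ε := by gcongr <;> [exact hx j; exact hy j]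
      _ = ε := by rw [← add_mul, hab, one_mul]
  have cube_conv : Convex ℝ cube := by
    intro x hx y hy a b ha hb hab i
    exact convex_Icc _ _ (hx i) (hy i) ha hb hab
  have slab_meas : MeasurableSet slab := by
    have : slab = ⋂ j, {x | |(M' *ᵥ x) j| ≤ ε} := by ext; simp [slab]
    rw [this]
    refine MeasurableSet.iInter fun j => measurableSet_le ?_ measurable_const
    have : Continuous (fun x : Fin r → ℝ => |(M' *ᵥ x) j|) := by
      unfold mulVec dotProduct; fun_prop
    exact this.measurable
  have slab_neg : ∀ x, -x ∈ slab ↔ x ∈ slab := by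
    intro x; simp [slab, mulVec_neg]
  have hvol : ENNReal.ofReal (Real.exp (-Real.pi * (C * ε ^ 2)) * (2 * ε) ^ s / d) ≤ volume (slab ∩ cube) := by
    refine (hC ε hε0).trans ?_
    refine (peak_pi r (f := slab.indicator 1) (measurable_const.indicator slab_meas)
      (lc_indicator slab_conv) ?_).trans ?_
    · intro x
      simp only [Set.indicator, slab_neg, Pi.one_apply]
    · have hcm : MeasurableSet cube := by
        have : cube = Set.univ.pi fun _ => Set.Icc (-(1 / 2) : ℝ) (1 / 2) := by
          ext; simp only [cube, Set.mem_ofPred_eq, Set.mem_univ_pi]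
        rw [this]
        exact MeasurableSet.univ_pi fun _ => measurableSet_Icc
      rw [← lintegral_indicator_one (slab_meas.inter hcm)]
      refine lintegral_mono fun x => ?_
      by_cases hx : x ∈ cube
      · by_cases hx2 : x ∈ slab
        · rw [Set.indicator_of_mem (Set.mem_inter hx2 hx), Set.indicator_of_mem hx2]
          have : ∏ i, iv (x i) = 1 := Finset.prod_eq_one fun i _ => by
            rw [iv, Set.indicator_of_mem (hx i)]; rfl
          rw [this]; simp
        · simp [hx2]
      · simp only [cube, Set.mem_ofPred_eq, not_forall] at hx
        obtain ⟨i, hi⟩ := hx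
        have : ∏ i, iv (x i) = 0 := Finset.prod_eq_zero (Finset.mem_univ i) (by
          rw [iv, Set.indicator_of_notMem hi])
        rw [this]; simp
  let S : Set (Fin r → ℝ) := Matrix.toLin' Ψ ⁻¹' (slab ∩ cube)
  have hS : volume S = ENNReal.ofReal |Ψ.det⁻¹| * volume (slab ∩ cube) := by
    have h := Measure.addHaar_preimage_linearMap (volume : Measure (Fin r → ℝ)) (f := Matrix.toLin' Ψ)
      (by rw [LinearMap.det_toLin', hΨdet]; positivity) (slab ∩ cube)
    rwa [LinearMap.det_toLin'] at h
  have hbig : (2 : ℝ≥0∞) ^ r < volume S := by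
    rw [hS]
    refine lt_of_lt_of_le ?_ (mul_le_mul_right hvol _)
    rw [← ENNReal.ofReal_mul (abs_nonneg _)]
    have e2 : (2 : ℝ≥0∞) ^ r = ENNReal.ofReal (2 ^ r) := by
      rw [ENNReal.ofReal_pow (by norm_num)]; simp
    have hval : |Ψ.det⁻¹| * (Real.exp (-Real.pi * (C * ε ^ 2)) * (2 * ε) ^ s / d) =
        2 ^ r * (T ^ (r - s) * (1 - δ) ^ s * Real.exp (-Real.pi * (C * ε ^ 2)) / d) := by
      rw [hΨdet, abs_of_pos (by positivity)]
      have hr : T ^ r = T ^ (r - s) * T ^ s := by rw [← pow_add]; congr 1; omega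
      have h2e : (2 * ε) ^ s = δ ^ s * (1 - δ) ^ s / T ^ s := by
        rw [← mul_pow, ← div_pow]; congr 1; rw [hε]; field_simp
      rw [h2e, inv_pow, mul_pow, hr]
      field_simp
    rw [hval, e2]
    apply (ENNReal.ofReal_lt_ofReal_iff_of_nonneg (by positivity)).2
    have : 1 < T ^ (r - s) * (1 - δ) ^ s * Real.exp (-Real.pi * (C * ε ^ 2)) / d := by
      rw [lt_div_iff₀ hd0]; simpa using hδ
    have h2 : (0 : ℝ) < 2 ^ r := by positivity
    nlinarith
  have hsym : ∀ x ∈ S, -x ∈ S := by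
    intro x hx
    refine ⟨?_, ?_⟩
    · rw [map_neg]; exact (slab_neg _).2 hx.1
    · rw [map_neg]
      intro i
      obtain ⟨h1, h2⟩ := hx.2 i
      simp only [Pi.neg_apply, Set.mem_Icc]
      constructor <;> linarith
  -- Minkowski
  have hfd := ZSpan.isAddFundamentalDomain (Pi.basisFun ℝ (Fin r)) (volume : Measure (Fin r → ℝ))
  have hfv : volume (ZSpan.fundamentalDomain (Pi.basisFun ℝ (Fin r))) = 1 := by
    rw [ZSpan.fundamentalDomain_pi_basisFun, volume_pi_pi]; simp
  have : Countable (Submodule.span ℤ (Set.range (Pi.basisFun ℝ (Fin r)))).toAddSubgroup := by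
    change Countable (Submodule.span ℤ (Set.range (Pi.basisFun ℝ (Fin r))))
    infer_instance
  obtain ⟨x, hx0, hxS⟩ := exists_ne_zero_mem_lattice_of_measure_mul_two_pow_lt_measure
    (L := (Submodule.span ℤ (Set.range (Pi.basisFun ℝ (Fin r)))).toAddSubgroup)
    (μ := (volume : Measure (Fin r → ℝ))) (s := S) hfd hsym
    ((slab_conv.inter cube_conv).linear_preimage _)
    (by rw [hfv, one_mul, Module.finrank_fintype_fun_eq_card, Fintype.card_fin]; exact hbig)
  · have hxi : ∀ i, ∃ k : ℤ, (k : ℝ) = (x : Fin r → ℝ) i := by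
      intro i
      have := ((Pi.basisFun ℝ (Fin r)).mem_span_iff_repr_mem ℤ (x : Fin r → ℝ)).1 x.2 i
      simpa using this
    choose y hy using hxi
    have hyx : (fun i => (y i : ℝ)) = (x : Fin r → ℝ) := funext hy
    obtain ⟨h1, h2⟩ := hxS
    have hΨ : ∀ v, Matrix.toLin' Ψ v = (2 * T)⁻¹ • (Φ *ᵥ v) := by
      intro v; rw [toLin'_apply, smul_mulVec]
    rw [hΨ] at h1 h2
    have hMy : M' *ᵥ (x : Fin r → ℝ) = fun j => ((M *ᵥ y) j : ℝ) := by
      rw [← hyx]; funext j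
      simp [hM', mulVec, dotProduct]
    have hMy0 : M *ᵥ y = 0 := by
      funext j
      have h3 := h1 j
      rw [mulVec_smul, mulVec_mulVec, hMΦ, smul_mulVec, hMy] at h3
      simp only [Pi.smul_apply, smul_eq_mul] at h3
      rw [abs_mul, abs_mul, abs_of_pos (by positivity), abs_of_pos hδ0, hε] at h3
      have h4 : |((M *ᵥ y) j : ℝ)| ≤ 1 - δ := by
        have h5 : (2 * T)⁻¹ * (δ * |((M *ᵥ y) j : ℝ)|) = (δ / (2 * T)) * |((M *ᵥ y) j : ℝ)| := by
          field_simp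
        have h6 : δ * (1 - δ) / (2 * T) = (δ / (2 * T)) * (1 - δ) := by ring
        rw [h5, h6] at h3
        exact le_of_mul_le_mul_left h3 (by positivity)
      have h7 : |((M *ᵥ y) j : ℝ)| < 1 := by linarith
      have h8 : |(M *ᵥ y) j| < 1 := by exact_mod_cast h7
      exact Int.abs_lt_one_iff.1 h8
    refine ⟨y, ?_, hMy0, fun i => ?_⟩
    · rintro rfl
      apply hx0
      ext i
      rw [← hy i]; simp
    · have hΦx : Φ *ᵥ (x : Fin r → ℝ) = x := by
        simp only [Φ]
        rw [add_mulVec, one_mulVec, ← mulVec_mulVec, hMy, hMy0]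
        have : (fun j : Fin s => (((0 : Fin s → ℤ) j : ℤ) : ℝ)) = 0 := by funext j; simp
        rw [this, mulVec_zero, add_zero]
      have h3 := h2 i
      rw [hΦx] at h3
      simp only [Pi.smul_apply, smul_eq_mul] at h3
      have h4 : |(2 * T)⁻¹ * (x : Fin r → ℝ) i| ≤ 1 / 2 := abs_le.2 h3
      rw [abs_mul, abs_of_pos (by positivity), inv_mul_le_iff₀ (by positivity)] at h4
      rw [hy i]
      linarith

open Matrix in
theorem core_sharp {s r : ℕ} (hsr : s < r) (M : Matrix (Fin s) (Fin r) ℤ) (N : Matrix (Fin r) (Fin s) ℤ)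
    (hMN : M * N = 1) :
    0 < ((M * Mᵀ).det : ℝ) ∧ ∃ x : Fin r → ℤ, x ≠ 0 ∧ M *ᵥ x = 0 ∧
      ∀ i, |(x i : ℝ)| ≤ √((M * Mᵀ).det : ℝ) ^ ((1 : ℝ) / (r - s : ℝ)) := by
  have hdet : 0 < ((M * Mᵀ).det : ℝ) := by
    set M' : Matrix (Fin s) (Fin r) ℝ := M.map (Int.castRingHom ℝ) with hM'
    set N' : Matrix (Fin r) (Fin s) ℝ := N.map (Int.castRingHom ℝ) with hN'
    have hMN' : M' * N' = 1 := by
      rw [hM', hN', ← Matrix.map_mul, hMN]; simp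
    have hdetE : (M' * M'ᵀ).det = ((M * Mᵀ).det : ℝ) := by
      rw [hM', ← transpose_map, ← Matrix.map_mul]
      exact ((Int.castRingHom ℝ).map_det _).symm
    rw [← hdetE]
    have := PosDef.mul_conjTranspose_self M' (fun v w hvw => by
      have h := congrArg (fun u => u ᵥ* N') hvw
      simpa [vecMul_vecMul, hMN'] using h)
    simpa using this.det_pos
  refine ⟨hdet, ?_⟩
  set d : ℝ := √((M * Mᵀ).det : ℝ) with hd
  have hd0 : 0 < d := Real.sqrt_pos.2 hdet
  set T₀ : ℝ := d ^ ((1 : ℝ) / (r - s : ℝ)) with hT₀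
  have hT₀0 : 0 < T₀ := Real.rpow_pos_of_pos hd0 _
  have hpow : T₀ ^ (r - s) = d := by
    rw [hT₀, one_div, ← Nat.cast_sub hsr.le]
    exact Real.rpow_inv_natCast_pow hd0.le (by omega)
  have hfl := Int.lt_floor_add_one T₀
  obtain ⟨x, hx0, hMx, hx⟩ := core hsr M N hMN ((T₀ + (⌊T₀⌋ + 1)) / 2) (by linarith)
    (by
      rw [← hd, ← hpow]
      exact pow_lt_pow_left₀ (by linarith) hT₀0.le (by omega)) hdet
  refine ⟨x, hx0, hMx, fun i => ?_⟩
  have h1 : |(x i : ℝ)| < ⌊T₀⌋ + 1 := lt_of_le_of_lt (hx i) (by linarith)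
  have h2 : |x i| < ⌊T₀⌋ + 1 := by exact_mod_cast h1
  have h3 : |x i| ≤ ⌊T₀⌋ := by omega
  have h4 : ((|x i| : ℤ) : ℝ) ≤ T₀ := (Int.cast_le.2 h3).trans (Int.floor_le _)
  simpa using h4

open Matrix in
theorem gcd_minors_one {s r : ℕ} (M : Matrix (Fin s) (Fin r) ℤ) (N : Matrix (Fin r) (Fin s) ℤ)
    (hMN : M * N = 1) :
    Finset.gcd Finset.univ (fun g : Fin s ↪ Fin r => (M.submatrix id g).det) = 1 := by
  set d := Finset.gcd Finset.univ (fun g : Fin s ↪ Fin r => (M.submatrix id g).det) with hd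
  have h1 : d ∣ 1 := by
    have e : (1 : ℤ) = (M * N)ᵀ.det := by rw [det_transpose, hMN, det_one]
    have e2 : (M * N)ᵀ = fun i => ∑ k, N k i • Mᵀ k := by
      funext i j
      simp [Matrix.mul_apply, Finset.sum_apply, mul_comm]
    rw [e, e2]
    change d ∣ detRowAlternating (fun i => ∑ k, N k i • Mᵀ k)
    rw [← AlternatingMap.coe_multilinearMap, MultilinearMap.map_sum]
    refine Finset.dvd_sum fun f _ => ?_
    rw [MultilinearMap.map_smul_univ _ (fun i => N (f i) i) (fun i => Mᵀ (f i))]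
    refine Dvd.dvd.mul_left ?_ _
    by_cases hf : Function.Injective f
    · have h2 : d ∣ (M.submatrix id (⟨f, hf⟩ : Fin s ↪ Fin r)).det :=
        Finset.gcd_dvd (f := fun g : Fin s ↪ Fin r => (M.submatrix id g).det) (Finset.mem_univ (⟨f, hf⟩ : Fin s ↪ Fin r))
      rw [← det_transpose] at h2
      exact h2
    · have : (detRowAlternating : (Fin s → ℤ) [⋀^Fin s]→ₗ[ℤ] ℤ) (fun i => Mᵀ (f i)) = 0 := by
        refine AlternatingMap.map_eq_zero_of_not_injective _ _ fun hinj => hf fun a b hab => hinj ?_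
        simp only [hab]
      rw [AlternatingMap.coe_multilinearMap, this]
      exact dvd_zero _
  rw [hd, ← Finset.normalize_gcd, ← hd]
  exact normalize_eq_one.2 (isUnit_of_dvd_one h1)

open Matrix in
theorem factor {s r : ℕ} (A : Matrix (Fin s) (Fin r) ℤ) (hrank : A.rank = s) :
    ∃ (H : Matrix (Fin s) (Fin s) ℤ) (M : Matrix (Fin s) (Fin r) ℤ) (N : Matrix (Fin r) (Fin s) ℤ),
      A = H * M ∧ M * N = 1 ∧ H.det ≠ 0 := by
  let W := LinearMap.range A.mulVecLin
  let b : Module.Basis (Fin s) ℤ W := Module.finBasisOfFinrankEq ℤ W hrank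
  let f : (Fin r → ℤ) →ₗ[ℤ] (Fin s → ℤ) := b.equivFun.toLinearMap ∘ₗ A.mulVecLin.rangeRestrict
  let H : Matrix (Fin s) (Fin s) ℤ := Matrix.of fun j i => (b i : Fin s → ℤ) j
  have hH : ∀ v, H *ᵥ v = ((b.equivFun.symm v : W) : Fin s → ℤ) := by
    intro v
    rw [Module.Basis.equivFun_symm_apply]
    funext j
    simp [H, mulVec, dotProduct, mul_comm]
  have hM : ∀ v, LinearMap.toMatrix' f *ᵥ v = f v := fun v => LinearMap.toMatrix'_mulVec f v
  have hsurj : Function.Surjective f :=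
    b.equivFun.surjective.comp A.mulVecLin.surjective_rangeRestrict
  choose g hg using hsurj
  refine ⟨H, LinearMap.toMatrix' f, Matrix.of fun k i => g (Pi.single i 1) k, ?_, ?_, ?_⟩
  · apply Matrix.ext_of_mulVec_single
    intro k
    rw [← mulVec_mulVec, hM, hH]
    simp [f]
  · apply Matrix.ext_of_mulVec_single
    intro k
    rw [← mulVec_mulVec, hM, one_mulVec, mulVec_single_one]
    exact hg _
  · intro h0
    obtain ⟨v, hv0, hv⟩ := Matrix.exists_mulVec_eq_zero_iff.2 h0
    rw [hH] at hv
    apply hv0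
    have : b.equivFun.symm v = 0 := Subtype.ext hv
    exact b.equivFun.symm.map_eq_zero_iff.1 this

open Matrix

theorem stmt_15 (s r : ℕ) (hsr : s < r) (A : Matrix (Fin s) (Fin r) ℤ)
    (hrank : A.rank = s)
    (D : ℤ)
    (hD : D = Finset.gcd Finset.univ
      (fun g : Fin s ↪ Fin r => (A.submatrix id g).det)) :
    ∃ x : Fin r → ℤ, x ≠ 0 ∧ A.mulVec x = 0 ∧
      ∀ i, (|x i| : ℝ) ≤
        ((D : ℝ)⁻¹ * Real.sqrt |((A * A.transpose).det : ℝ)|) ^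
          ((1 : ℝ) / (r - s : ℝ)) := by
  obtain ⟨H, M, N, hA, hMN, hH⟩ := factor A hrank
  obtain ⟨hdet, x, hx0, hMx, hx⟩ := core_sharp hsr M N hMN
  refine ⟨x, hx0, by rw [hA, ← mulVec_mulVec, hMx, mulVec_zero], fun i => ?_⟩
  have hD' : D = |H.det| := by
    have h1 : (fun g : Fin s ↪ Fin r => (A.submatrix id g).det) =
        fun g : Fin s ↪ Fin r => H.det * (M.submatrix id g).det := by
      funext g
      rw [← det_mul, hA]
      rfl
    rw [hD, h1, Finset.gcd_mul_left, gcd_minors_one M N hMN, mul_one, Int.abs_eq_normalize]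
  have hHR : (H.det : ℝ) ≠ 0 := by exact_mod_cast hH
  have key : (D : ℝ)⁻¹ * √|((A * Aᵀ).det : ℝ)| = √((M * Mᵀ).det : ℝ) := by
    have h2 : (A * Aᵀ).det = H.det ^ 2 * (M * Mᵀ).det := by
      rw [hA, transpose_mul, Matrix.mul_assoc, ← Matrix.mul_assoc M, ← Matrix.mul_assoc, det_mul,
        det_mul, det_transpose]
      ring
    rw [h2, hD']
    rw [Int.cast_mul, Int.cast_pow, Int.cast_abs,
      abs_of_nonneg (mul_nonneg (sq_nonneg _) hdet.le), Real.sqrt_mul (by positivity), Real.sqrt_sq_eq_abs,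
      ← mul_assoc, inv_mul_cancel₀ (abs_ne_zero.2 hHR), one_mul]
  rw [key]
  exact hx i
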